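/- Uniqueness for the Laplace equation in weighted spaces: suppose u : ℝ^d → ℝ is harmonic (Δu = 0 in the sense of distributions) and ∫_{ℝ^d} (1+|x|²)^{p(θ−1−d/p)/2} |u(x)|^p dx < ∞ with 1 + d/p < θ and p > 1. Then u ≡ 0. -/

import Mathlib

open MeasureTheory

/-!
Fix a smooth radial kernel `ψ` of integral one supported in the unit ball, and let
`ψ_r x = r⁻ᵈ ψ (x / r)`. The derivative of `ψ_r` in `r` is the Laplacian of a smooth compactly
supported function, so for weakly harmonic `u` the mean `∫ ψ_r (x - y) u x dx` does not depend on
`r`. For almost every `y` it tends to `u y` as `r → 0`, by Lebesgue differentiation; as `r → ∞` it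
tends to `c` as soon as the averages of `‖u - c‖` over large balls tend to zero. For `u ∈ Lᵖ` with
`1 ≤ p < ∞` this holds with `c = 0` by Hölder's inequality, and a weight bounded below by one only
strengthens the `Lᵖ` condition.
-/

open Filter Function InnerProductSpace Laplacian Metric Module Set Topology
open scoped ContDiff ENNReal

section Averages

variable {α : Type*} {F : Type*} [MeasurableSpace α] [NormedAddCommGroup F] {μ : Measure α}
  {u : α → F}

theorem memLp_of_lintegral_weight_mul_rpow_lt_top {w : α → ℝ} {p : ℝ} (hp : 0 < p)
    (hu : AEStronglyMeasurable u μ) (hw : ∀ x, 1 ≤ w x)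
    (hint : ∫⁻ x, ENNReal.ofReal (w x * ‖u x‖ ^ p) ∂μ < ⊤) :
    MemLp u (ENNReal.ofReal p) μ := by
  refine ⟨hu, ?_⟩
  rw [eLpNorm_lt_top_iff_lintegral_rpow_enorm_lt_top (by simpa using hp) ENNReal.ofReal_ne_top,
    ENNReal.toReal_ofReal hp.le]
  refine (lintegral_mono fun x => ?_).trans_lt hint
  rw [← ofReal_norm, ENNReal.ofReal_rpow_of_nonneg (norm_nonneg _) hp.le]
  exact ENNReal.ofReal_le_ofReal (le_mul_of_one_le_left (by positivity) (hw x))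

theorem setAverage_norm_le_eLpNorm_mul_rpow {p : ℝ≥0∞} (hp : 1 ≤ p) (hu : MemLp u p μ)
    {s : Set α} (hs : 0 < μ.real s) :
    ⨍ x in s, ‖u x‖ ∂μ ≤ (eLpNorm u p μ).toReal * μ.real s ^ (-p.toReal⁻¹) := by
  have hs_top : μ s ≠ ⊤ := fun h => by simp [measureReal_def, h] at hs
  have hs_zero : μ s ≠ 0 := fun h => by simp [measureReal_def, h] at hs
  have holder : eLpNorm u 1 (μ.restrict s) ≤ eLpNorm u p μ * μ s ^ (1 - p.toReal⁻¹) :=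
    calc eLpNorm u 1 (μ.restrict s)
        ≤ eLpNorm u p (μ.restrict s) * μ s ^ (1 - p.toReal⁻¹) := by
          simpa using eLpNorm_le_eLpNorm_mul_rpow_measure_univ hp hu.1.restrict
      _ ≤ eLpNorm u p μ * μ s ^ (1 - p.toReal⁻¹) := by
          gcongr; exact Measure.restrict_le_self
  have integral_le : ∫ x in s, ‖u x‖ ∂μ ≤
      (eLpNorm u p μ).toReal * μ.real s ^ (1 - p.toReal⁻¹) := by
    rw [integral_norm_eq_lintegral_enorm hu.1.restrict, ← eLpNorm_one_eq_lintegral_enorm,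
      measureReal_def, ENNReal.toReal_rpow, ← ENNReal.toReal_mul]
    exact ENNReal.toReal_mono
      (ENNReal.mul_ne_top hu.2.ne (ENNReal.rpow_ne_top_of_ne_zero hs_zero hs_top)) holder
  calc ⨍ x in s, ‖u x‖ ∂μ = (μ.real s)⁻¹ * ∫ x in s, ‖u x‖ ∂μ := by
        rw [setAverage_eq, smul_eq_mul]
    _ ≤ (μ.real s)⁻¹ * ((eLpNorm u p μ).toReal * μ.real s ^ (1 - p.toReal⁻¹)) := by gcongr
    _ = (eLpNorm u p μ).toReal * μ.real s ^ (-p.toReal⁻¹) := by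
        rw [sub_eq_add_neg, Real.rpow_add hs, Real.rpow_one]
        field_simp

theorem tendsto_setAverage_norm_of_memLp {p : ℝ≥0∞} (hp : 1 ≤ p) (hp_top : p ≠ ⊤)
    (hu : MemLp u p μ) {ι : Type*} {l : Filter ι} {s : ι → Set α}
    (hs : Tendsto (fun i => μ.real (s i)) l atTop) :
    Tendsto (fun i => ⨍ x in s i, ‖u x‖ ∂μ) l (𝓝 0) := by
  have hp_pos : 0 < p.toReal⁻¹ :=
    inv_pos.2 (ENNReal.toReal_pos (zero_lt_one.trans_le hp).ne' hp_top)
  have bound_tendsto : Tendsto (fun i => (eLpNorm u p μ).toReal * μ.real (s i) ^ (-p.toReal⁻¹))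
      l (𝓝 0) := by
    simpa using ((tendsto_rpow_neg_atTop hp_pos).comp hs).const_mul (eLpNorm u p μ).toReal
  refine squeeze_zero' (Eventually.of_forall fun i => ?_) ?_ bound_tendsto
  · rw [setAverage_eq, smul_eq_mul]
    positivity
  · filter_upwards [hs.eventually_gt_atTop 0] with i hi
    exact setAverage_norm_le_eLpNorm_mul_rpow hp hu hi

end Averages

section Balls

variable {E : Type*} [NormedAddCommGroup E] [NormedSpace ℝ E] [FiniteDimensional ℝ E]
  [MeasurableSpace E] [BorelSpace E] {μ : Measure E} [μ.IsAddHaarMeasure]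

theorem tendsto_measureReal_closedBall_atTop [Nontrivial E] (y : E) :
    Tendsto (fun r => μ.real (closedBall y r)) atTop atTop := by
  have unitBall_pos : 0 < μ.real (closedBall (0 : E) 1) :=
    ENNReal.toReal_pos (measure_closedBall_pos _ _ one_pos).ne' measure_closedBall_lt_top.ne
  refine ((tendsto_pow_atTop (finrank_pos (R := ℝ) (M := E)).ne').atTop_mul_const
    unitBall_pos).congr' ?_
  filter_upwards [eventually_ge_atTop 0] with r hr
  exact (Measure.addHaar_real_closedBall' μ y hr).symm

theorem setAverage_closedBall_le_of_dist_le {f : E → ℝ} (hf : LocallyIntegrable f μ)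
    (hf_nonneg : 0 ≤ f) {y z : E} {r : ℝ} (hr : 0 < r) (hyz : dist y z ≤ r) :
    ⨍ x in closedBall y r, f x ∂μ ≤
      2 ^ finrank ℝ E * ⨍ x in closedBall z (2 * r), f x ∂μ := by
  have integral_le : ∫ x in closedBall y r, f x ∂μ ≤ ∫ x in closedBall z (2 * r), f x ∂μ :=
    setIntegral_mono_set (hf.integrableOn_isCompact (isCompact_closedBall _ _))
      (Eventually.of_forall hf_nonneg)
      (closedBall_subset_closedBall' (by linarith)).eventuallyLE
  rw [setAverage_eq, setAverage_eq, Measure.addHaar_real_closedBall' μ y hr.le,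
    Measure.addHaar_real_closedBall' μ z (by positivity : 0 ≤ 2 * r), smul_eq_mul, smul_eq_mul]
  calc _ ≤ (r ^ finrank ℝ E * μ.real (closedBall 0 1))⁻¹ *
        ∫ x in closedBall z (2 * r), f x ∂μ := by gcongr
    _ = _ := by
        rw [mul_pow]
        field_simp

theorem tendsto_setAverage_closedBall_of_center {f : E → ℝ} (hf : LocallyIntegrable f μ)
    (hf_nonneg : 0 ≤ f) {z : E}
    (hz : Tendsto (fun r => ⨍ x in closedBall z r, f x ∂μ) atTop (𝓝 0)) (y : E) :
    Tendsto (fun r => ⨍ x in closedBall y r, f x ∂μ) atTop (𝓝 0) := by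
  have bound_tendsto : Tendsto (fun r => 2 ^ finrank ℝ E * ⨍ x in closedBall z (2 * r), f x ∂μ)
      atTop (𝓝 0) := by
    simpa using (hz.comp (tendsto_id.const_mul_atTop two_pos)).const_mul (2 ^ finrank ℝ E)
  refine squeeze_zero' (Eventually.of_forall fun r => ?_) ?_ bound_tendsto
  · rw [setAverage_eq, smul_eq_mul]
    exact mul_nonneg (by positivity) (integral_nonneg hf_nonneg)
  · filter_upwards [eventually_gt_atTop 0, eventually_ge_atTop (dist y z)] with r hr hyz
    exact setAverage_closedBall_le_of_dist_le hf hf_nonneg hr hyz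

end Balls

section DilatedKernel

variable {E : Type*} [NormedAddCommGroup E] [NormedSpace ℝ E]

/-- The dilation of the kernel `ψ` to scale `r`, normalised to have the same integral as `ψ`. -/
noncomputable def dilatedKernel (ψ : E → ℝ) (r : ℝ) (x : E) : ℝ :=
  (r ^ finrank ℝ E)⁻¹ * ψ (r⁻¹ • x)

variable {ψ : E → ℝ} {r : ℝ}

theorem continuous_dilatedKernel (hψ : Continuous ψ) : Continuous (dilatedKernel ψ r) := by
  unfold dilatedKernel
  fun_prop

theorem support_dilatedKernel_sub_subset (hψ : support ψ ⊆ closedBall 0 1) (hr : 0 < r) (y : E) :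
    support (fun x => dilatedKernel ψ r (x - y)) ⊆ closedBall y r := by
  intro x hx
  have mem_unitBall : r⁻¹ • (x - y) ∈ closedBall (0 : E) 1 := hψ (right_ne_zero_of_mul hx)
  rwa [mem_closedBall_zero_iff, norm_smul, norm_inv, Real.norm_of_nonneg hr.le,
    inv_mul_le_one₀ hr, ← mem_closedBall_iff_norm] at mem_unitBall

variable [FiniteDimensional ℝ E] [MeasurableSpace E] [BorelSpace E] {μ : Measure E}
  [μ.IsAddHaarMeasure]

theorem integral_dilatedKernel_sub (hr : 0 < r) (y : E) :
    ∫ x, dilatedKernel ψ r (x - y) ∂μ = ∫ x, ψ x ∂μ := by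
  rw [integral_sub_right_eq_self (dilatedKernel ψ r)]
  simp only [dilatedKernel]
  rw [integral_const_mul, Measure.integral_comp_inv_smul_of_nonneg μ ψ hr.le, smul_eq_mul,
    inv_mul_cancel_left₀ (by positivity)]

theorem abs_dilatedKernel_sub_le {B : ℝ} (hB : ∀ x, |ψ x| ≤ B) (hr : 0 < r) (x y : E) :
    |dilatedKernel ψ r (x - y)| ≤ B * μ.real (closedBall (0 : E) 1) / μ.real (closedBall y r) := by
  have unitBall_pos : 0 < μ.real (closedBall (0 : E) 1) :=
    ENNReal.toReal_pos (measure_closedBall_pos _ _ one_pos).ne' measure_closedBall_lt_top.ne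
  calc |dilatedKernel ψ r (x - y)| = (r ^ finrank ℝ E)⁻¹ * |ψ (r⁻¹ • (x - y))| := by
        rw [dilatedKernel, abs_mul, abs_of_pos (by positivity)]
    _ ≤ (r ^ finrank ℝ E)⁻¹ * B := by gcongr; exact hB _
    _ = B * μ.real (closedBall (0 : E) 1) / μ.real (closedBall y r) := by
        rw [Measure.addHaar_real_closedBall' μ y hr.le]
        field_simp

variable {F : Type*} [NormedAddCommGroup F] [NormedSpace ℝ F] [CompleteSpace F] {u : E → F}

theorem tendsto_integral_dilatedKernel_smul (hψ : Continuous ψ)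
    (hψ_supp : support ψ ⊆ closedBall 0 1) (hψ_int : ∫ x, ψ x ∂μ = 1)
    (hu : LocallyIntegrable u μ) {l : Filter ℝ} (hl : ∀ᶠ r in l, 0 < r) {y : E} {c : F}
    (hc : Tendsto (fun r => ⨍ x in closedBall y r, ‖u x - c‖ ∂μ) l (𝓝 0)) :
    Tendsto (fun r => ∫ x, dilatedKernel ψ r (x - y) • u x ∂μ) l (𝓝 c) := by
  obtain ⟨B, hB⟩ := (HasCompactSupport.of_support_subset_isCompact (isCompact_closedBall 0 1)
    hψ_supp).exists_bound_of_continuous hψ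
  refine tendsto_integral_smul_of_tendsto_average_norm_sub
    (B * μ.real (closedBall (0 : E) 1)) hc ?_ ?_ ?_ ?_
  · exact Eventually.of_forall fun r => hu.integrableOn_isCompact (isCompact_closedBall y r)
  · refine tendsto_const_nhds.congr' ?_
    filter_upwards [hl] with r hr
    rw [integral_dilatedKernel_sub hr, hψ_int]
  · filter_upwards [hl] with r hr
    exact support_dilatedKernel_sub_subset hψ_supp hr y
  · filter_upwards [hl] with r hr x
    exact abs_dilatedKernel_sub_le hB hr x y

theorem ae_tendsto_integral_dilatedKernel_smul (hψ : Continuous ψ)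
    (hψ_supp : support ψ ⊆ closedBall 0 1) (hψ_int : ∫ x, ψ x ∂μ = 1)
    (hu : LocallyIntegrable u μ) :
    ∀ᵐ y ∂μ, Tendsto (fun r => ∫ x, dilatedKernel ψ r (x - y) • u x ∂μ) (𝓝[>] 0) (𝓝 (u y)) := by
  filter_upwards [(Besicovitch.vitaliFamily μ).ae_tendsto_average_norm_sub hu] with y hy
  exact tendsto_integral_dilatedKernel_smul hψ hψ_supp hψ_int hu self_mem_nhdsWithin
    (hy.comp (Besicovitch.tendsto_filterAt μ y))

end DilatedKernel

section ParametricIntegral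

theorem hasDerivAt_integral_smul_of_isCompact {X F : Type*} [TopologicalSpace X] [T2Space X]
    [SecondCountableTopology X] [MeasurableSpace X] [OpensMeasurableSpace X] {μ : Measure X}
    [NormedAddCommGroup F] [NormedSpace ℝ F] {u : X → F} (hu : LocallyIntegrable u μ)
    {k k' : ℝ → X → ℝ} {a b r : ℝ} (hr : r ∈ Ioo a b) {C : Set X} (hC : IsCompact C)
    (hk : ∀ t ∈ Ioo a b, Continuous (k t)) (hk_supp : ∀ t ∈ Ioo a b, support (k t) ⊆ C)
    (hk' : ContinuousOn (uncurry k') (Icc a b ×ˢ univ))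
    (hderiv : ∀ t ∈ Ioo a b, ∀ x, HasDerivAt (k · x) (k' t x) t) :
    HasDerivAt (fun t => ∫ x, k t x • u x ∂μ) (∫ x, k' r x • u x ∂μ) r := by
  obtain ⟨B, hB⟩ := (isCompact_Icc.prod hC).exists_bound_of_continuousOn
    (hk'.mono (prod_mono_right (subset_univ C)))
  have hk'_zero : ∀ t ∈ Ioo a b, ∀ x ∉ C, k' t x = 0 := fun t ht x hx =>
    (hderiv t ht x).unique <| (hasDerivAt_const t 0).congr_of_eventuallyEq <| by
      filter_upwards [isOpen_Ioo.mem_nhds ht] with t' ht'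
      exact notMem_support.1 fun h => hx (hk_supp t' ht' h)
  have hk'_cont : Continuous (k' r) :=
    hk'.comp_continuous (by fun_prop : Continuous fun x => (r, x)) fun x =>
      ⟨Ioo_subset_Icc_self hr, mem_univ x⟩
  refine (hasDerivAt_integral_of_dominated_loc_of_deriv_le (s := Ioo a b)
    (F := fun t x => k t x • u x) (F' := fun t x => k' t x • u x)
    (bound := C.indicator fun x => B * ‖u x‖)
    (isOpen_Ioo.mem_nhds hr) ?_ ?_ ?_ ?_ ?_ ?_).2
  · filter_upwards [isOpen_Ioo.mem_nhds hr] with t ht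
    exact (hk t ht).aestronglyMeasurable.smul hu.aestronglyMeasurable
  · exact hu.integrable_smul_left_of_hasCompactSupport (hk r hr)
      (.of_support_subset_isCompact hC (hk_supp r hr))
  · exact hk'_cont.aestronglyMeasurable.smul hu.aestronglyMeasurable
  · filter_upwards with x t ht
    by_cases hx : x ∈ C
    · rw [indicator_of_mem hx, norm_smul]
      gcongr
      exact hB (t, x) ⟨Ioo_subset_Icc_self ht, hx⟩
    · rw [indicator_of_notMem hx, hk'_zero t ht x hx, zero_smul, norm_zero]
  · rw [integrable_indicator_iff hC.measurableSet]
    exact (hu.integrableOn_isCompact hC).norm.const_mul B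
  · filter_upwards with x t ht
    exact (hderiv t ht x).smul_const (u x)

end ParametricIntegral

section RadialProfile

variable {E : Type*} [NormedAddCommGroup E]

theorem exists_contDiff_primitive_eq_zero_of_le {b : ℝ → ℝ} {a : ℝ} (hb : ContDiff ℝ ∞ b)
    (hb_zero : ∀ t, a ≤ t → b t = 0) :
    ∃ g : ℝ → ℝ, ContDiff ℝ ∞ g ∧ (∀ t, HasDerivAt g (b t) t) ∧ ∀ t, a ≤ t → g t = 0 := by
  have hderiv : ∀ t, HasDerivAt (fun t => ∫ x in a..t, b x) (b t) t := fun t =>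
    hb.continuous.integral_hasStrictDerivAt a t |>.hasDerivAt
  refine ⟨fun t => ∫ x in a..t, b x, ?_, hderiv, fun t ht => ?_⟩
  · rw [contDiff_infty_iff_deriv, funext fun t => (hderiv t).deriv]
    exact ⟨fun t => (hderiv t).differentiableAt, hb⟩
  · refine intervalIntegral.integral_zero_ae (Eventually.of_forall fun x hx => hb_zero x ?_)
    rw [uIoc_of_le ht] at hx
    exact hx.1.le

theorem support_comp_norm_sq_subset {b : ℝ → ℝ} (hb_zero : ∀ t, 1 ≤ t → b t = 0) :
    support (fun x : E => b (‖x‖ ^ 2)) ⊆ closedBall 0 1 := by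
  intro x hx
  contrapose! hx
  rw [mem_closedBall_zero_iff, not_le] at hx
  exact notMem_support.2 (hb_zero _ (one_le_pow₀ hx.le))

variable [NormedSpace ℝ E]

theorem exists_contDiff_integral_comp_norm_sq_eq_one [FiniteDimensional ℝ E] [MeasurableSpace E]
    [BorelSpace E] (μ : Measure E) [μ.IsAddHaarMeasure] :
    ∃ b : ℝ → ℝ, ContDiff ℝ ∞ b ∧ (∀ t, 1 ≤ t → b t = 0) ∧ ∫ x : E, b (‖x‖ ^ 2) ∂μ = 1 := by
  let bump : ContDiffBump (0 : ℝ) := ⟨1 / 2, 1, by norm_num, by norm_num⟩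
  have bump_zero : ∀ t, 1 ≤ t → bump t = 0 := fun t ht =>
    bump.zero_of_le_dist (by simpa using ht.trans (le_abs_self t))
  have radial_cont : Continuous fun x : E => bump (‖x‖ ^ 2) :=
    bump.continuous.comp (by fun_prop)
  have integral_pos : 0 < ∫ x : E, bump (‖x‖ ^ 2) ∂μ :=
    radial_cont.integral_pos_of_hasCompactSupport_nonneg_nonzero
      (.of_support_subset_isCompact (isCompact_closedBall 0 1)
        (support_comp_norm_sq_subset bump_zero))
      (fun _ => bump.nonneg) (x := 0)
      (bump.pos_of_mem_ball (by simp [bump])).ne'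
  refine ⟨fun t => (∫ x : E, bump (‖x‖ ^ 2) ∂μ)⁻¹ * bump t, contDiff_const.mul bump.contDiff,
    fun t ht => by simp only [bump_zero t ht, mul_zero], ?_⟩
  rw [integral_const_mul, inv_mul_cancel₀ integral_pos.ne']

theorem hasDerivAt_dilatedKernel_comp_norm_sq {b : ℝ → ℝ} (hb : Differentiable ℝ b) {r : ℝ}
    (hr : 0 < r) (x : E) :
    HasDerivAt (fun r => dilatedKernel (fun z : E => b (‖z‖ ^ 2)) r x)
      (-(r ^ (finrank ℝ E + 1))⁻¹ *
        (finrank ℝ E * b (‖x‖ ^ 2 / r ^ 2) + 2 * (‖x‖ ^ 2 / r ^ 2) * deriv b (‖x‖ ^ 2 / r ^ 2)))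
      r := by
  have arg_deriv : HasDerivAt (fun r => ‖x‖ ^ 2 / r ^ 2) (-(2 * ‖x‖ ^ 2 / r ^ 3)) r := by
    refine (((hasDerivAt_pow 2 r).fun_inv (by positivity)).const_mul (‖x‖ ^ 2)).congr_deriv ?_
    push_cast
    field_simp
  have power_deriv :
      HasDerivAt (fun r => (r ^ finrank ℝ E)⁻¹) (-(finrank ℝ E * (r ^ (finrank ℝ E + 1))⁻¹)) r := by
    have zpow_deriv := hasDerivAt_zpow (-(finrank ℝ E : ℤ)) r (.inl hr.ne')
    rw [← neg_add', zpow_neg] at zpow_deriv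
    simpa [← zpow_natCast] using zpow_deriv
  have kernel_eq : (fun r => dilatedKernel (fun z : E => b (‖z‖ ^ 2)) r x) =
      fun r => (r ^ finrank ℝ E)⁻¹ * b (‖x‖ ^ 2 / r ^ 2) := by
    ext r
    rw [dilatedKernel, norm_smul, mul_pow, norm_inv, inv_pow, Real.norm_eq_abs, sq_abs,
      inv_mul_eq_div (r ^ 2)]
  rw [kernel_eq]
  refine (power_deriv.fun_mul ((hb _).hasDerivAt.comp r arg_deriv)).congr_deriv ?_
  simp only [comp_apply]
  field_simp
  ring

end RadialProfile

section RadialLaplacian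

variable {E : Type*} [NormedAddCommGroup E] [InnerProductSpace ℝ E]

theorem hasFDerivAt_comp_norm_sub_sq {g : ℝ → ℝ} {g' : ℝ} {x y : E}
    (hg : HasDerivAt g g' (‖x - y‖ ^ 2)) :
    HasFDerivAt (fun z => g (‖z - y‖ ^ 2)) ((2 * g') • innerSL ℝ (x - y)) x := by
  refine (hg.comp_hasFDerivAt x ((hasFDerivAt_id x).sub_const y).norm_sq).congr_fderiv ?_
  ext v
  simp only [id_eq, map_sub, ContinuousLinearMap.comp_id, smul_apply, sub_apply,
    coe_innerSL_apply, nsmul_eq_mul, Nat.cast_ofNat, smul_eq_mul]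
  ring

theorem iteratedFDeriv_two_comp_norm_sub_sq {g g' : ℝ → ℝ} {g'' : ℝ} {x y : E}
    (hg : ∀ t, HasDerivAt g (g' t) t) (hg' : HasDerivAt g' g'' (‖x - y‖ ^ 2)) (v : E) :
    iteratedFDeriv ℝ 2 (fun z => g (‖z - y‖ ^ 2)) x ![v, v] =
      4 * g'' * inner ℝ (x - y) v ^ 2 + 2 * g' (‖x - y‖ ^ 2) * ‖v‖ ^ 2 := by
  have fderiv_eq : fderiv ℝ (fun z => g (‖z - y‖ ^ 2)) =
      fun z => (2 * g' (‖z - y‖ ^ 2)) • innerSL ℝ (z - y) :=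
    funext fun z => (hasFDerivAt_comp_norm_sub_sq (hg _)).fderiv
  have inner_deriv : HasFDerivAt (fun z => innerSL ℝ (z - y)) (innerSL ℝ (E := E)) x :=
    (innerSL ℝ (E := E)).hasFDerivAt.comp x ((hasFDerivAt_id x).sub_const y)
  have fderiv_deriv : fderiv ℝ (fun z => (2 * g' (‖z - y‖ ^ 2)) • innerSL ℝ (z - y)) x = _ :=
    (((hasFDerivAt_comp_norm_sub_sq hg').const_mul 2).smul inner_deriv).fderiv
  rw [iteratedFDeriv_two_apply, fderiv_eq, fderiv_deriv]
  change 2 * g' (‖x - y‖ ^ 2) * inner ℝ v v +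
    2 * (2 * g'' * inner ℝ (x - y) v) * inner ℝ (x - y) v = _
  rw [real_inner_self_eq_norm_sq]
  ring

variable [FiniteDimensional ℝ E]

theorem laplacian_comp_norm_sub_sq {g g' : ℝ → ℝ} {g'' : ℝ} {x y : E}
    (hg : ∀ t, HasDerivAt g (g' t) t) (hg' : HasDerivAt g' g'' (‖x - y‖ ^ 2)) :
    Δ (fun z => g (‖z - y‖ ^ 2)) x =
      4 * ‖x - y‖ ^ 2 * g'' + 2 * finrank ℝ E * g' (‖x - y‖ ^ 2) := by
  rw [laplacian_eq_iteratedFDeriv_stdOrthonormalBasis]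
  simp only [iteratedFDeriv_two_comp_norm_sub_sq hg hg', OrthonormalBasis.norm_eq_one]
  rw [Finset.sum_add_distrib, ← Finset.mul_sum, OrthonormalBasis.sum_sq_inner_left]
  simp only [one_pow, mul_one, Finset.sum_const, Finset.card_univ, Fintype.card_fin, nsmul_eq_mul]
  ring

theorem laplacian_comp_norm_sub_sq_div {g b : ℝ → ℝ} (hg : ∀ t, HasDerivAt g (b t) t)
    (hb : Differentiable ℝ b) (r : ℝ) (x y : E) :
    Δ (fun z => g (‖z - y‖ ^ 2 / r ^ 2)) x =
      2 / r ^ 2 * (finrank ℝ E * b (‖x - y‖ ^ 2 / r ^ 2) +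
        2 * (‖x - y‖ ^ 2 / r ^ 2) * deriv b (‖x - y‖ ^ 2 / r ^ 2)) := by
  have scaled_deriv : ∀ t, HasDerivAt (fun t => g (t / r ^ 2)) (b (t / r ^ 2) / r ^ 2) t :=
    fun t => ((hg _).comp t ((hasDerivAt_id t).div_const (r ^ 2))).congr_deriv (mul_one_div _ _)
  have scaled_deriv₂ : ∀ t, HasDerivAt (fun t => b (t / r ^ 2) / r ^ 2)
      (deriv b (t / r ^ 2) / r ^ 2 / r ^ 2) t := fun t =>
    ((hb _).hasDerivAt.comp t ((hasDerivAt_id t).div_const (r ^ 2))).congr_deriv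
      (mul_one_div _ _) |>.div_const (r ^ 2)
  rw [laplacian_comp_norm_sub_sq scaled_deriv (scaled_deriv₂ _)]
  ring

end RadialLaplacian

section WeaklyHarmonic

variable {E F : Type*} [NormedAddCommGroup E] [InnerProductSpace ℝ E] [FiniteDimensional ℝ E]
  [MeasurableSpace E] [BorelSpace E] [NormedAddCommGroup F] [NormedSpace ℝ F]

/-- Harmonicity in the sense of distributions: a locally integrable function annihilating the
Laplacian of every real-valued test function. -/
structure IsWeaklyHarmonic (u : E → F) : Prop where
  locallyIntegrable : LocallyIntegrable u
  integral_laplacian_smul : ∀ φ : E → ℝ, ContDiff ℝ ∞ φ → HasCompactSupport φ →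
    ∫ x, Δ φ x • u x = 0

namespace IsWeaklyHarmonic

variable {u : E → F} {b : ℝ → ℝ}

theorem integral_deriv_dilatedKernel_smul (hu : IsWeaklyHarmonic u) (hb : ContDiff ℝ ∞ b)
    (hb_zero : ∀ t, 1 ≤ t → b t = 0) (y : E) {r : ℝ} (hr : 0 < r) :
    ∫ x, deriv (fun r => dilatedKernel (fun z : E => b (‖z‖ ^ 2)) r (x - y)) r • u x = 0 := by
  obtain ⟨g, hg, hg_deriv, hg_zero⟩ := exists_contDiff_primitive_eq_zero_of_le hb hb_zero
  have hb_diff : Differentiable ℝ b := hb.differentiable (by simp)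
  have test_smooth : ContDiff ℝ ∞ fun z : E => g (‖z - y‖ ^ 2 / r ^ 2) :=
    hg.comp (((contDiff_id.sub contDiff_const).norm_sq ℝ).div_const _)
  have test_supp : HasCompactSupport fun z : E => g (‖z - y‖ ^ 2 / r ^ 2) := by
    refine .intro (isCompact_closedBall y r) fun x hx => hg_zero _ ?_
    rw [mem_closedBall_iff_norm, not_le] at hx
    rw [← div_pow]
    exact one_le_pow₀ ((one_le_div hr).2 hx.le)
  have deriv_eq : ∀ x, deriv (fun r => dilatedKernel (fun z : E => b (‖z‖ ^ 2)) r (x - y)) r =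
      -(r / (2 * r ^ finrank ℝ E)) * Δ (fun z => g (‖z - y‖ ^ 2 / r ^ 2)) x := fun x => by
    rw [(hasDerivAt_dilatedKernel_comp_norm_sq hb_diff hr _).deriv,
      laplacian_comp_norm_sub_sq_div hg_deriv hb_diff]
    field_simp
    ring
  simp only [deriv_eq, mul_smul]
  rw [integral_smul, hu.integral_laplacian_smul _ test_smooth test_supp, smul_zero]

theorem hasDerivAt_integral_dilatedKernel_smul (hu : IsWeaklyHarmonic u) (hb : ContDiff ℝ ∞ b)
    (hb_zero : ∀ t, 1 ≤ t → b t = 0) (y : E) {r : ℝ} (hr : 0 < r) :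
    HasDerivAt (fun r => ∫ x, dilatedKernel (fun z : E => b (‖z‖ ^ 2)) r (x - y) • u x) 0 r := by
  have hb_diff : Differentiable ℝ b := hb.differentiable (by simp)
  have hb_cont : Continuous b := hb.continuous
  have hb'_cont : Continuous (deriv b) := hb.continuous_deriv (by simp)
  have hpos : ∀ t ∈ Icc (r / 2) (2 * r), 0 < t := fun t ht => (half_pos hr).trans_le ht.1
  rw [← hu.integral_deriv_dilatedKernel_smul hb hb_zero y hr]
  refine hasDerivAt_integral_smul_of_isCompact hu.locallyIntegrable (a := r / 2) (b := 2 * r)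
    (k' := fun r x => deriv (fun r => dilatedKernel (fun z : E => b (‖z‖ ^ 2)) r (x - y)) r)
    ⟨by linarith, by linarith⟩ (isCompact_closedBall y (2 * r)) ?_ ?_ ?_ ?_
  · exact fun t _ => (continuous_dilatedKernel (by fun_prop)).comp (by fun_prop)
  · exact fun t ht => (support_dilatedKernel_sub_subset (support_comp_norm_sq_subset hb_zero)
      (hpos t (Ioo_subset_Icc_self ht)) y).trans (closedBall_subset_closedBall ht.2.le)
  · refine ContinuousOn.congr (f := fun q : ℝ × E => -(q.1 ^ (finrank ℝ E + 1))⁻¹ *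
      (finrank ℝ E * b (‖q.2 - y‖ ^ 2 / q.1 ^ 2) + 2 * (‖q.2 - y‖ ^ 2 / q.1 ^ 2) *
        deriv b (‖q.2 - y‖ ^ 2 / q.1 ^ 2))) ?_ fun q hq =>
          (hasDerivAt_dilatedKernel_comp_norm_sq hb_diff (hpos _ hq.1) _).deriv
    have hne : ∀ n, ∀ q ∈ Icc (r / 2) (2 * r) ×ˢ (univ : Set E), q.1 ^ n ≠ 0 :=
      fun n q hq => pow_ne_zero n (hpos _ hq.1).ne'
    have arg_cont : ContinuousOn (fun q : ℝ × E => ‖q.2 - y‖ ^ 2 / q.1 ^ 2)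
        (Icc (r / 2) (2 * r) ×ˢ univ) := .div (by fun_prop) (by fun_prop) (hne 2)
    have power_cont : ContinuousOn (fun q : ℝ × E => (q.1 ^ (finrank ℝ E + 1))⁻¹)
        (Icc (r / 2) (2 * r) ×ˢ univ) := .inv₀ (by fun_prop) (hne _)
    fun_prop
  · exact fun t ht x => (hasDerivAt_dilatedKernel_comp_norm_sq hb_diff
      (hpos t (Ioo_subset_Icc_self ht)) (x - y)).differentiableAt.hasDerivAt

theorem integral_dilatedKernel_smul_eq (hu : IsWeaklyHarmonic u) (hb : ContDiff ℝ ∞ b)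
    (hb_zero : ∀ t, 1 ≤ t → b t = 0) (y : E) {r s : ℝ} (hr : 0 < r) (hs : 0 < s) :
    ∫ x, dilatedKernel (fun z : E => b (‖z‖ ^ 2)) r (x - y) • u x =
      ∫ x, dilatedKernel (fun z : E => b (‖z‖ ^ 2)) s (x - y) • u x :=
  isOpen_Ioi.is_const_of_deriv_eq_zero isPreconnected_Ioi
    (fun _ ht => (hu.hasDerivAt_integral_dilatedKernel_smul hb hb_zero y
      ht).differentiableAt.differentiableWithinAt)
    (fun _ ht => (hu.hasDerivAt_integral_dilatedKernel_smul hb hb_zero y ht).deriv)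
    (mem_Ioi.2 hr) (mem_Ioi.2 hs)

theorem ae_eq_const_of_tendsto_setAverage_norm_sub [CompleteSpace F] (hu : IsWeaklyHarmonic u)
    {c : F} {z : E}
    (hc : Tendsto (fun r => ⨍ x in closedBall z r, ‖u x - c‖) atTop (𝓝 0)) :
    u =ᵐ[volume] fun _ => c := by
  obtain ⟨b, hb, hb_zero, hb_int⟩ :=
    exists_contDiff_integral_comp_norm_sq_eq_one (volume : Measure E)
  have ψ_cont : Continuous fun x : E => b (‖x‖ ^ 2) := hb.continuous.comp (by fun_prop)
  have ψ_supp := support_comp_norm_sq_subset (E := E) hb_zero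
  filter_upwards [ae_tendsto_integral_dilatedKernel_smul ψ_cont ψ_supp hb_int
    hu.locallyIntegrable] with y tendsto_uy
  have tendsto_c := tendsto_integral_dilatedKernel_smul ψ_cont ψ_supp hb_int hu.locallyIntegrable
    (eventually_gt_atTop 0) (tendsto_setAverage_closedBall_of_center
      (fun x => (hu.locallyIntegrable.sub (locallyIntegrable_const c) x).norm)
      (fun _ => norm_nonneg _) hc y)
  have mean_eq : ∀ r > 0, ∫ x, dilatedKernel (fun z : E => b (‖z‖ ^ 2)) 1 (x - y) • u x =
      ∫ x, dilatedKernel (fun z : E => b (‖z‖ ^ 2)) r (x - y) • u x := fun r hr =>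
    hu.integral_dilatedKernel_smul_eq hb hb_zero y one_pos hr
  calc u y = ∫ x, dilatedKernel (fun z : E => b (‖z‖ ^ 2)) 1 (x - y) • u x :=
        tendsto_nhds_unique tendsto_uy <| tendsto_const_nhds.congr' <|
          eventually_nhdsWithin_of_forall mean_eq
    _ = c := tendsto_nhds_unique (tendsto_const_nhds.congr' <|
        (eventually_gt_atTop 0).mono mean_eq) tendsto_c

end IsWeaklyHarmonic

theorem isWeaklyHarmonic_iff_euclideanSpace {d : ℕ} {u : EuclideanSpace ℝ (Fin d) → ℝ} :
    IsWeaklyHarmonic u ↔ LocallyIntegrable u ∧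
      ∀ φ : EuclideanSpace ℝ (Fin d) → ℝ, ContDiff ℝ ∞ φ → HasCompactSupport φ →
        ∫ x, u x * (∑ i, iteratedFDeriv ℝ 2 φ x
          ![EuclideanSpace.single i (1 : ℝ), EuclideanSpace.single i (1 : ℝ)]) = 0 := by
  have laplacian_eq (φ : EuclideanSpace ℝ (Fin d) → ℝ) (x) : Δ φ x = ∑ i, iteratedFDeriv ℝ 2 φ x
      ![EuclideanSpace.single i (1 : ℝ), EuclideanSpace.single i (1 : ℝ)] := by
    simp only [laplacian_eq_iteratedFDeriv_orthonormalBasis φ (EuclideanSpace.basisFun (Fin d) ℝ),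
      EuclideanSpace.basisFun_apply]
  simp only [← laplacian_eq, mul_comm (u _)]
  exact ⟨fun h => ⟨h.1, h.2⟩, fun h => ⟨h.1, h.2⟩⟩

theorem stmt13_general [Nontrivial E] [CompleteSpace F] {u : E → F} (hu : IsWeaklyHarmonic u)
    {p : ℝ} (hp : 1 ≤ p) {w : E → ℝ} (hw : ∀ x, 1 ≤ w x)
    (hint : ∫⁻ x, ENNReal.ofReal (w x * ‖u x‖ ^ p) < ⊤) : u =ᵐ[volume] 0 := by
  have u_memLp : MemLp u (ENNReal.ofReal p) :=
    memLp_of_lintegral_weight_mul_rpow_lt_top (zero_lt_one.trans_le hp)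
      hu.locallyIntegrable.aestronglyMeasurable hw hint
  refine hu.ae_eq_const_of_tendsto_setAverage_norm_sub (c := 0) (z := 0) ?_
  simpa only [sub_zero] using tendsto_setAverage_norm_of_memLp
    (ENNReal.one_le_ofReal.2 hp) ENNReal.ofReal_ne_top u_memLp
    (tendsto_measureReal_closedBall_atTop 0)

end WeaklyHarmonic

theorem stmt13 (d : ℕ) (hd : 1 ≤ d) (p θ : ℝ) (hp : 1 < p)
    (hθ : 1 + (d : ℝ) / p < θ)
    (u : EuclideanSpace ℝ (Fin d) → ℝ)
    (hu : LocallyIntegrable u volume)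
    -- `u` is harmonic in the sense of distributions: it annihilates the Laplacian of
    -- every smooth compactly supported test function.
    (hharm : ∀ φ : EuclideanSpace ℝ (Fin d) → ℝ, ContDiff ℝ (⊤ : ℕ∞) φ → HasCompactSupport φ →
      ∫ x, u x *
        (∑ i, iteratedFDeriv ℝ 2 φ x
          ![EuclideanSpace.single i (1 : ℝ), EuclideanSpace.single i (1 : ℝ)]) = 0)
    -- weighted integrability: `∫ (1+|x|²)^{p(θ−1−d/p)/2} |u|^p < ∞`
    (hint : (∫⁻ x, ENNReal.ofReal
        ((1 + ‖x‖ ^ 2) ^ (p * (θ - 1 - (d : ℝ) / p) / 2) * |u x| ^ p)) < ⊤) :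
    u =ᵐ[volume] 0 := by
  have : Nonempty (Fin d) := Fin.pos_iff_nonempty.1 hd
  refine stmt13_general (isWeaklyHarmonic_iff_euclideanSpace.2 ⟨hu, hharm⟩) hp.le (fun x => ?_) hint
  exact Real.one_le_rpow (le_add_of_nonneg_right (by positivity))
    (div_nonneg (mul_nonneg (by linarith) (by linarith)) two_pos.le)
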